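/- (Theorem 1, 𝒟-relation) For every N ≥ 2 and every u ∈ ℂ: Q^(N) ∘ 𝒟^(N)(u) − d(u)² · 𝒟^(N−1)(u) ∘ Q^(N) = (−1)^N b(u) c(u) · (E⁺ ⊗ ℬ^(N−1)(u)) as linear maps V^⊗N → V^⊗(N−1). -/

import Mathlib

noncomputable section
open Complex Matrix

/-- Spin configurations of a chain of `N` sites: `true` encodes `v₊`, `false` encodes `v₋`.
The site with label `i ∈ {1,…,N}` corresponds to the index `i-1 : Fin N`
(so the leftmost site `N` is the index `N-1`). -/
abbrev Conf (N : ℕ) := Fin N → Bool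

/-- The combinatorial-point parameter `η = 2πi/3`. -/
def ηc : ℂ := 2 * (Real.pi : ℂ) * Complex.I / 3

/-- `a(u) = sinh(u+η)/sinh η`. -/
def aF (u : ℂ) : ℂ := Complex.sinh (u + ηc) / Complex.sinh ηc
/-- `b(u) = sinh(u)/sinh η`. -/
def bF (u : ℂ) : ℂ := Complex.sinh u / Complex.sinh ηc
/-- `c(u) = 1`. -/
def cF (_ : ℂ) : ℂ := 1
/-- `d(u) = sinh(u-η)/sinh η`. -/
def dF (u : ℂ) : ℂ := Complex.sinh (u - ηc) / Complex.sinh ηc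
/-- The R-matrix `R(u)` on `V⊗V` in the ordered basis `(v₊⊗v₊, v₊⊗v₋, v₋⊗v₊, v₋⊗v₋)`:
`[[a,0,0,0],[0,b,c,0],[0,c,b,0],[0,0,0,a]]`. -/
def Rm (u : ℂ) : Matrix (Bool × Bool) (Bool × Bool) ℂ :=
  Matrix.of fun o i =>
    if o = i then (if o.1 = o.2 then aF u else bF u)
    else if o.1 = i.2 ∧ o.2 = i.1 ∧ o.1 ≠ o.2 then cF u
    else 0

/-- The boundary K-matrix `K⁻(u) = diag(d(u), -a(u))` in the basis `(v₊, v₋)`. -/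
def Km (u : ℂ) : Matrix Bool Bool ℂ :=
  Matrix.of fun o i => if o = i then (if o then dF u else -aF u) else 0

/-- `R₀ᵢ(u)`: the matrix `R(u)` applied to `V₀ ⊗ Vᵢ` (auxiliary space first), identity
elsewhere, on `V₀ ⊗ V^⊗N`; here the site with label `i` is the index `i-1`. -/
def R0i (N : ℕ) (u : ℂ) (i : Fin N) :
    Matrix (Bool × Conf N) (Bool × Conf N) ℂ :=
  Matrix.of fun x y =>
    if ∀ j, j ≠ i → x.2 j = y.2 j then Rm u (x.1, x.2 i) (y.1, y.2 i) else 0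

/-- `Rᵢ₀(u)`: the matrix `R(u)` applied to `Vᵢ ⊗ V₀` (auxiliary space second), identity
elsewhere, on `V₀ ⊗ V^⊗N`. -/
def Ri0 (N : ℕ) (u : ℂ) (i : Fin N) :
    Matrix (Bool × Conf N) (Bool × Conf N) ℂ :=
  Matrix.of fun x y =>
    if ∀ j, j ≠ i → x.2 j = y.2 j then Rm u (x.2 i, x.1) (y.2 i, y.1) else 0

/-- `T^(N)(u) = R₀₁(u) R₀₂(u) ⋯ R₀N(u)`. -/
def Tmono (N : ℕ) (u : ℂ) : Matrix (Bool × Conf N) (Bool × Conf N) ℂ :=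
  (List.ofFn fun i : Fin N => R0i N u i).prod

/-- `T̄^(N)(u) = R_{N0}(u) ⋯ R_{20}(u) R_{10}(u)`. -/
def Tbar (N : ℕ) (u : ℂ) : Matrix (Bool × Conf N) (Bool × Conf N) ℂ :=
  (List.ofFn fun i : Fin N => Ri0 N u i).reverse.prod

/-- `K₀⁻(u)`: the matrix `K⁻(u)` acting on the auxiliary space `V₀`, identity on `V^⊗N`. -/
def K0m (N : ℕ) (u : ℂ) : Matrix (Bool × Conf N) (Bool × Conf N) ℂ :=
  Matrix.of fun x y => if x.2 = y.2 then Km u x.1 y.1 else 0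

/-- The double-row monodromy matrix `U^(N)(u) = T̄^(N)(u) K₀⁻(u) T^(N)(u)`. -/
def Umono (N : ℕ) (u : ℂ) : Matrix (Bool × Conf N) (Bool × Conf N) ℂ :=
  Tbar N u * K0m N u * Tmono N u

/-- `𝒜^(N)(u)`: the `(v₊, v₊)` auxiliary-space block of `U^(N)(u)`. -/
def Aop (N : ℕ) (u : ℂ) : Matrix (Conf N) (Conf N) ℂ :=
  Matrix.of fun s t => Umono N u (true, s) (true, t)
/-- `ℬ^(N)(u)`: the `(v₊, v₋)` auxiliary-space block of `U^(N)(u)`. -/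
def Bop (N : ℕ) (u : ℂ) : Matrix (Conf N) (Conf N) ℂ :=
  Matrix.of fun s t => Umono N u (true, s) (false, t)
/-- `𝒞^(N)(u)`: the `(v₋, v₊)` auxiliary-space block of `U^(N)(u)`. -/
def Cop (N : ℕ) (u : ℂ) : Matrix (Conf N) (Conf N) ℂ :=
  Matrix.of fun s t => Umono N u (false, s) (true, t)
/-- `𝒟^(N)(u)`: the `(v₋, v₋)` auxiliary-space block of `U^(N)(u)`. -/
def Dop (N : ℕ) (u : ℂ) : Matrix (Conf N) (Conf N) ℂ :=
  Matrix.of fun s t => Umono N u (false, s) (false, t)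

/-- The transfer matrix
`t^(N)(u) = (sinh u / sinh η) 𝒜^(N)(u) - (sinh(u+2η)/sinh η) 𝒟^(N)(u)`. -/
def tOp (N : ℕ) (u : ℂ) : Matrix (Conf N) (Conf N) ℂ :=
  (Complex.sinh u / Complex.sinh ηc) • Aop N u
    - (Complex.sinh (u + 2 * ηc) / Complex.sinh ηc) • Dop N u

/-- The pseudovacuum `Ω^(N) = v₊ ⊗ ⋯ ⊗ v₊`. -/
def Omega (N : ℕ) : Conf N → ℂ := fun s => if ∀ j, s j = true then 1 else 0

/-- `E^ε ⊗ X : V^⊗(n+2) → V^⊗(n+1)`: the linear functional `E^ε : V → ℂ`, `v_ε ↦ 1`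
(zero on the other basis vector), applied to the leftmost site `N = n+2`, tensored with
the operator `X` on the remaining sites `n+1,…,1`.  Here `e = true` encodes `ε = +`. -/
def Etens (n : ℕ) (e : Bool) (X : Matrix (Conf (n + 1)) (Conf (n + 1)) ℂ) :
    Matrix (Conf (n + 1)) (Conf (n + 2)) ℂ :=
  Matrix.of fun o i =>
    (if i (Fin.last (n + 1)) = e then 1 else 0) * X o (fun j => i (Fin.castSucc j))

/-- `F ⊗ X` : the one-site operator `F` applied to the leftmost site `N+1` of a chain of
`N+1` sites, tensored with the operator `X` on the remaining sites `N,…,1`. -/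
def siteTens (N : ℕ) (F : Matrix Bool Bool ℂ) (X : Matrix (Conf N) (Conf N) ℂ) :
    Matrix (Conf (N + 1)) (Conf (N + 1)) ℂ :=
  Matrix.of fun o i =>
    F (o (Fin.last N)) (i (Fin.last N)) * X (fun j => o (Fin.castSucc j)) (fun j => i (Fin.castSucc j))

/-- `E^ε_{ε'} : V → V` sends `v_ε ↦ v_{ε'}` and the other basis vector to `0`
(`true` encodes `+`). -/
def Eop (e e' : Bool) : Matrix Bool Bool ℂ :=
  Matrix.of fun o i => if i = e ∧ o = e' then 1 else 0
/-- The local SUSY generator `q_{i,i+1}` (with `i = k+1`) on a chain of `n+2` sites: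
it applies `q : V⊗V → V`, `q(v₊⊗v₊) = v₋` (zero on the other basis vectors), to the
adjacent sites `i, i+1` (merging them into the single site `i` of the output chain of
`n+1` sites) and the identity to all other sites. -/
def qMerge (n : ℕ) (k : Fin (n + 1)) : Matrix (Conf (n + 1)) (Conf (n + 2)) ℂ :=
  Matrix.of fun o i =>
    if i (Fin.castSucc k) = true ∧ i (Fin.succ k) = true ∧ o k = false ∧
        (∀ j : Fin (n + 1),
          ((j : ℕ) < (k : ℕ) → o j = i (Fin.castSucc j)) ∧
          ((k : ℕ) < (j : ℕ) → o j = i (Fin.succ j)))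
    then 1 else 0

/-- The SUSY operator `Q^(N)` for `N = n+2`:
`Q^(N) = ∑_{i=1}^{N-1} (-1)^{i+1} q_{i,i+1} : V^⊗N → V^⊗(N-1)`. -/
def Qop (n : ℕ) : Matrix (Conf (n + 1)) (Conf (n + 2)) ℂ :=
  ∑ k : Fin (n + 1), ((-1 : ℂ) ^ (k : ℕ)) • qMerge n k

/-- The local operator `q†_i` (with `i = k+1`) on a chain of `n+1` sites: it applies
`q† : V → V⊗V`, `q†(v₋) = v₊⊗v₊`, `q†(v₊) = 0`, to site `i` (splitting it into the two
adjacent sites `i, i+1` of the output chain of `n+2` sites) and the identity elsewhere. -/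
def qSplit (n : ℕ) (k : Fin (n + 1)) : Matrix (Conf (n + 2)) (Conf (n + 1)) ℂ :=
  Matrix.of fun o i =>
    if o (Fin.castSucc k) = true ∧ o (Fin.succ k) = true ∧ i k = false ∧
        (∀ j : Fin (n + 1),
          ((j : ℕ) < (k : ℕ) → i j = o (Fin.castSucc j)) ∧
          ((k : ℕ) < (j : ℕ) → i j = o (Fin.succ j)))
    then 1 else 0

/-- The adjoint SUSY operator `Q^(N)†` for `N = n+2`:
`Q^(N)† = ∑_{i=1}^{N-1} (-1)^{i+1} q†_i : V^⊗(N-1) → V^⊗N`. -/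
def Qdag (n : ℕ) : Matrix (Conf (n + 2)) (Conf (n + 1)) ℂ :=
  ∑ k : Fin (n + 1), ((-1 : ℂ) ^ (k : ℕ)) • qSplit n k

lemma sinh_ne : Complex.sinh ηc ≠ 0 := by
  have h : ηc = ((2 * Real.pi / 3 : ℝ) : ℂ) * Complex.I := by
    unfold ηc; push_cast; ring
  rw [h, Complex.sinh_mul_I]
  have h3 : Real.sin (2 * Real.pi / 3) ≠ 0 := by
    apply ne_of_gt
    apply Real.sin_pos_of_pos_of_lt_pi <;> linarith [Real.pi_pos]
  refine mul_ne_zero ?_ Complex.I_ne_zero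
  rw [← Complex.ofReal_sin]
  exact_mod_cast h3

lemma cosh_eta : Complex.cosh ηc = -1 / 2 := by
  have h : ηc = ((2 * Real.pi / 3 : ℝ) : ℂ) * Complex.I := by
    unfold ηc; push_cast; ring
  rw [h, Complex.cosh_mul_I, ← Complex.ofReal_cos]
  have : Real.cos (2 * Real.pi / 3) = -1 / 2 := by
    rw [show 2 * Real.pi / 3 = Real.pi - Real.pi / 3 by ring, Real.cos_pi_sub, Real.cos_pi_div_three]
    norm_num
  rw [this]; push_cast; ring

lemma d_rel (u : ℂ) : dF u = -aF u - bF u := by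
  unfold dF aF bF
  rw [Complex.sinh_add, Complex.sinh_sub, cosh_eta]
  ring

lemma ab_rel (u : ℂ) : aF u ^ 2 + aF u * bF u + bF u ^ 2 = 1 := by
  unfold aF bF
  have h := sinh_ne
  have h2 := Complex.cosh_sq u
  have h3 := Complex.cosh_sq ηc
  rw [cosh_eta] at h3
  rw [Complex.sinh_add, cosh_eta]
  field_simp
  linear_combination (4 * Complex.sinh ηc ^2) * h2 - 4 * Complex.sinh u ^ 2 * h3

/-- Boundary coefficients. -/
def Xc (u : ℂ) (V : Bool → Bool → ℂ) (e : Bool) : Bool → Bool → ℂ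
  | true, true => if e then dF u * V true false else 0
  | true, false => 0
  | false, true => if e then aF u * V true true + dF u * V false false else V true false
  | false, false => if e then bF u * V true false else 0

/-- One dressing step. -/
def dress (u : ℂ) (V : Bool → Bool → ℂ) (x y : Bool) (α β : Bool) : ℂ :=
  ∑ z : Bool, ∑ γ : Bool, ∑ δ : Bool, Rm u (x, α) (z, γ) * V γ δ * Rm u (δ, z) (β, y)

set_option maxHeartbeats 4000000 in
lemma local_id (u : ℂ) (V : Bool → Bool → ℂ) (x y1 y2 α β : Bool) :
    Xc u (dress u V x y1) y2 α β + dress u (Xc u V y1) x y2 α β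
     = (if x = false then dress u (dress u V true y1) true y2 α β else 0)
       - dF u ^ 2 * (if y1 = true ∧ y2 = true then dress u V x false α β else 0) := by
  have h1 := ab_rel u
  have h2 := d_rel u
  cases x <;> cases y1 <;> cases y2 <;> cases α <;> cases β <;>
    simp [Xc, dress, Rm, cF] <;> (try rw [h2]) <;>
    generalize aF u = a at * <;> generalize bF u = b at * <;> clear h2 <;>
    generalize V true true = v1 <;> generalize V true false = v2 <;> generalize V false true = v3 <;> generalize V false false = v4 <;> grind

/-- Append a site on the left end (last index). -/
def sn {N : ℕ} (s : Conf N) (x : Bool) : Conf (N + 1) := Fin.snoc (α := fun _ => Bool) s x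

/-- Forget the last index. -/
def ini {N : ℕ} (s : Conf (N + 1)) : Conf N := fun j => s (Fin.castSucc j)

@[simp] lemma sn_last {N : ℕ} (s : Conf N) (x : Bool) : sn s x (Fin.last N) = x := by
  simp [sn]

@[simp] lemma sn_castSucc {N : ℕ} (s : Conf N) (x : Bool) (j : Fin N) :
    sn s x (Fin.castSucc j) = s j := by
  simp [sn]

@[simp] lemma ini_sn {N : ℕ} (s : Conf N) (x : Bool) : ini (sn s x) = s := by
  funext j; simp [ini]

lemma sn_ini {N : ℕ} (s : Conf (N + 1)) : sn (ini s) (s (Fin.last N)) = s := by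
  funext j
  refine Fin.lastCases ?_ (fun j => ?_) j <;> simp [ini]

lemma sn_surj {N : ℕ} (s : Conf (N + 1)) : ∃ t x, s = sn t x := ⟨_, _, (sn_ini s).symm⟩

@[simp] lemma sn_inj {N : ℕ} (s t : Conf N) (x y : Bool) : sn s x = sn t y ↔ s = t ∧ x = y := by
  constructor
  · intro h
    exact ⟨by simpa using congrArg ini h, by simpa using congrFun h (Fin.last N)⟩
  · rintro ⟨rfl, rfl⟩; rfl

lemma sum_conf {N : ℕ} (f : Conf (N + 1) → ℂ) : ∑ s, f s = ∑ x : Bool, ∑ s : Conf N, f (sn s x) := by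
  rw [← Fintype.sum_prod_type']
  symm
  refine Fintype.sum_bijective (fun p : Bool × Conf N => sn p.2 p.1) ⟨?_, ?_⟩ _ _ (fun _ => rfl)
  · rintro ⟨x, s⟩ ⟨y, t⟩ h
    simp at h
    simp [h]
  · intro s
    exact ⟨(s (Fin.last N), ini s), sn_ini s⟩

/-- Identity on the additional last site. -/
def liftS {N : ℕ} (M : Matrix (Bool × Conf N) (Bool × Conf N) ℂ) :
    Matrix (Bool × Conf (N + 1)) (Bool × Conf (N + 1)) ℂ :=
  Matrix.of fun x y =>
    if x.2 (Fin.last N) = y.2 (Fin.last N) then M (x.1, ini x.2) (y.1, ini y.2) else 0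

lemma liftS_mul {N : ℕ} (A B : Matrix (Bool × Conf N) (Bool × Conf N) ℂ) :
    liftS (A * B) = liftS A * liftS B := by
  ext ⟨α, s⟩ ⟨β, t⟩
  obtain ⟨s, x, rfl⟩ := sn_surj s
  obtain ⟨t, y, rfl⟩ := sn_surj t
  simp only [liftS, Matrix.mul_apply, Matrix.of_apply, Fintype.sum_prod_type, sum_conf, sn_last, ini_sn]
  cases x <;> cases y <;> simp

lemma liftS_one {N : ℕ} : liftS (1 : Matrix (Bool × Conf N) (Bool × Conf N) ℂ) = 1 := by
  ext ⟨α, s⟩ ⟨β, t⟩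
  obtain ⟨s, x, rfl⟩ := sn_surj s
  obtain ⟨t, y, rfl⟩ := sn_surj t
  simp only [liftS, Matrix.of_apply, Matrix.one_apply, sn_last, ini_sn, Prod.mk.injEq, sn_inj]
  split_ifs <;> tauto

lemma liftS_prod {N : ℕ} (l : List (Matrix (Bool × Conf N) (Bool × Conf N) ℂ)) :
    liftS l.prod = (l.map liftS).prod := by
  induction l with
  | nil => simp [liftS_one]
  | cons a l ih => simp [liftS_mul, ih]

lemma forall_ne {N : ℕ} (i : Fin N) (s t : Conf N) (x y : Bool) :
    (∀ j, j ≠ Fin.castSucc i → sn s x j = sn t y j) ↔ (∀ j, j ≠ i → s j = t j) ∧ x = y := by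
  rw [Fin.forall_fin_succ']
  simp [Fin.castSucc_ne_last, (Fin.castSucc_ne_last i).symm]

lemma forall_ne_last {N : ℕ} (s t : Conf N) (x y : Bool) :
    (∀ j, j ≠ Fin.last N → sn s x j = sn t y j) ↔ s = t := by
  rw [Fin.forall_fin_succ']
  simp [Fin.castSucc_ne_last, funext_iff]

lemma liftS_R0i {N : ℕ} (u : ℂ) (i : Fin N) : liftS (R0i N u i) = R0i (N + 1) u (Fin.castSucc i) := by
  ext ⟨α, s⟩ ⟨β, t⟩
  obtain ⟨s, x, rfl⟩ := sn_surj s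
  obtain ⟨t, y, rfl⟩ := sn_surj t
  simp only [liftS, R0i, Matrix.of_apply, sn_last, ini_sn, forall_ne, sn_castSucc]
  split_ifs <;> tauto

lemma liftS_Ri0 {N : ℕ} (u : ℂ) (i : Fin N) : liftS (Ri0 N u i) = Ri0 (N + 1) u (Fin.castSucc i) := by
  ext ⟨α, s⟩ ⟨β, t⟩
  obtain ⟨s, x, rfl⟩ := sn_surj s
  obtain ⟨t, y, rfl⟩ := sn_surj t
  simp only [liftS, Ri0, Matrix.of_apply, sn_last, ini_sn, forall_ne, sn_castSucc]
  split_ifs <;> tauto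

lemma liftS_K0m {N : ℕ} (u : ℂ) : liftS (K0m N u) = K0m (N + 1) u := by
  ext ⟨α, s⟩ ⟨β, t⟩
  obtain ⟨s, x, rfl⟩ := sn_surj s
  obtain ⟨t, y, rfl⟩ := sn_surj t
  simp only [liftS, K0m, Matrix.of_apply, sn_last, ini_sn, sn_inj]
  split_ifs <;> tauto

lemma Tmono_succ (N : ℕ) (u : ℂ) :
    Tmono (N + 1) u = liftS (Tmono N u) * R0i (N + 1) u (Fin.last N) := by
  unfold Tmono
  rw [List.ofFn_succ', List.concat_eq_append, List.prod_append, liftS_prod, List.map_ofFn]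
  simp [Function.comp_def, liftS_R0i]

lemma Tbar_succ (N : ℕ) (u : ℂ) :
    Tbar (N + 1) u = Ri0 (N + 1) u (Fin.last N) * liftS (Tbar N u) := by
  unfold Tbar
  rw [List.ofFn_succ', List.concat_eq_append, List.reverse_append, List.prod_append, liftS_prod,
    List.map_reverse, List.map_ofFn]
  simp [Function.comp_def, liftS_Ri0]

lemma Umono_succ (N : ℕ) (u : ℂ) :
    Umono (N + 1) u
      = Ri0 (N + 1) u (Fin.last N) * liftS (Umono N u) * R0i (N + 1) u (Fin.last N) := by
  unfold Umono
  rw [Tmono_succ, Tbar_succ, liftS_mul, liftS_mul, liftS_K0m]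
  simp only [Matrix.mul_assoc]

lemma Umono_sn (N : ℕ) (u : ℂ) (α β x y : Bool) (s t : Conf N) :
    Umono (N + 1) u (α, sn s x) (β, sn t y)
      = dress u (fun γ δ => Umono N u (γ, s) (δ, t)) x y α β := by
  rw [Umono_succ]
  simp only [Matrix.mul_apply, Ri0, R0i, liftS, Matrix.of_apply, Fintype.sum_prod_type, sum_conf,
    sn_last, ini_sn, forall_ne_last, dress, Fintype.sum_bool]
  simp
  ring

lemma Umono_zero (u : ℂ) (α β : Bool) (s t : Conf 0) : Umono 0 u (α, s) (β, t) = Km u α β := by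
  have : s = t := Subsingleton.elim _ _
  simp [Umono, Tbar, Tmono, K0m, this]

/-- Recursive form of the SUSY operator. -/
def Qr : (N : ℕ) → Conf N → Conf (N + 1) → ℂ
  | 0, _, _ => 0
  | N + 1, o, i => (if o (Fin.last N) = i (Fin.last (N + 1)) then Qr N (ini o) (ini i) else 0)
      + (-1) ^ N * (if o (Fin.last N) = false ∧ ini i (Fin.last N) = true ∧ i (Fin.last (N + 1)) = true
          ∧ ini o = ini (ini i) then 1 else 0)

lemma Qr_succ (N : ℕ) (o i : Conf N) (x y1 y2 : Bool) : Qr (N + 1) (sn o x) (sn (sn i y1) y2)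
    = (if x = y2 then Qr N o (sn i y1) else 0)
      + (-1) ^ N * (if x = false ∧ y1 = true ∧ y2 = true ∧ o = i then 1 else 0) := by
  simp [Qr]

lemma qMerge_last (n : ℕ) (o : Conf (n + 1)) (i : Conf (n + 2)) :
    qMerge n (Fin.last n) o i = if o (Fin.last n) = false ∧ ini i (Fin.last n) = true ∧
      i (Fin.last (n + 1)) = true ∧ ini o = ini (ini i) then 1 else 0 := by
  simp only [qMerge, Matrix.of_apply]
  congr 1
  rw [Fin.forall_fin_succ', eq_iff_iff]
  simp [ini, funext_iff]
  tauto

lemma qMerge_castSucc (n : ℕ) (k : Fin (n + 1)) (o : Conf (n + 2)) (i : Conf (n + 3)) :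
    qMerge (n + 1) (Fin.castSucc k) o i
      = if o (Fin.last (n + 1)) = i (Fin.last (n + 2)) then qMerge n k (ini o) (ini i) else 0 := by
  simp only [qMerge, Matrix.of_apply]
  rw [← ite_and]
  congr 1
  rw [Fin.forall_fin_succ', eq_iff_iff]
  simp [ini]
  have h1 : (k : ℕ) ≤ n := by omega
  simp only [h1, true_imp_iff]
  tauto

lemma Qop_eq (n : ℕ) (o : Conf (n + 1)) (i : Conf (n + 2)) : Qop n o i = Qr (n + 1) o i := by
  induction n with
  | zero =>
    have := qMerge_last 0 o i
    simp only [Qop, Matrix.sum_apply, Matrix.smul_apply, Qr]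
    simpa using this
  | succ n ih =>
    rw [Qr, ← ih, ← qMerge_last]
    simp only [Qop, Matrix.sum_apply, Matrix.smul_apply]
    rw [Fin.sum_univ_castSucc]
    simp only [qMerge_castSucc]
    split_ifs <;> simp

lemma Qr_succ' (N : ℕ) (o : Conf N) (s : Conf (N + 1)) (x y : Bool) : Qr (N + 1) (sn o x) (sn s y)
    = (if x = y then Qr N o s else 0)
      + (-1) ^ N * (if s = sn o true then (if x = false ∧ y = true then 1 else 0) else 0) := by
  obtain ⟨s, z, rfl⟩ := sn_surj s
  rw [Qr_succ]
  congr 2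
  simp only [sn_inj, ← ite_and]
  congr 1
  grind

lemma dress_sum {ι : Type} [Fintype ι] (u : ℂ) (c : ι → ℂ) (f : ι → Bool → Bool → ℂ)
    (x y α β : Bool) :
    dress u (fun γ δ => ∑ i, c i * f i γ δ) x y α β = ∑ i, c i * dress u (f i) x y α β := by
  simp only [dress, Fintype.sum_bool, Finset.sum_mul, Finset.mul_sum, ← Finset.sum_add_distrib]
  refine Finset.sum_congr rfl fun i _ => ?_
  ring

lemma main_rel (N : ℕ) (u : ℂ) (α β : Bool) (o i : Conf N) (y : Bool) :
    (∑ s, Qr N o s * Umono (N + 1) u (α, s) (β, sn i y))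
      - dF u ^ 2 * ∑ t, Umono N u (α, o) (β, t) * Qr N t (sn i y)
    = (-1) ^ (N + 1) * Xc u (fun γ δ => Umono N u (γ, o) (δ, i)) y α β := by
  induction N generalizing α β y with
  | zero =>
    simp only [Umono_zero]
    cases y <;> cases α <;> cases β <;> simp [Qr, Xc, Km]
    ring
  | succ N ih =>
    obtain ⟨o, x, rfl⟩ := sn_surj o
    obtain ⟨i, y1, rfl⟩ := sn_surj i
    have e1 : (∑ s, Qr (N + 1) (sn o x) s * Umono (N + 1 + 1) u (α, s) (β, sn (sn i y1) y))
        = dress u (fun γ δ => ∑ s, Qr N o s * Umono (N + 1) u (γ, s) (δ, sn i y1)) x y α β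
          + (-1) ^ N * (if x = false then
             dress u (dress u (fun γ δ => Umono N u (γ, o) (δ, i)) true y1) true y α β else 0) := by
      rw [sum_conf, dress_sum]
      simp only [Qr_succ', Umono_sn (N + 1), add_mul, Finset.sum_add_distrib, Fintype.sum_bool]
      simp only [mul_assoc, ite_mul, zero_mul, ← Finset.mul_sum, Finset.sum_ite_eq',
        Finset.mem_univ, if_true, Umono_sn N]
      cases x <;> simp
    have e2 : (∑ t, Umono (N + 1) u (α, sn o x) (β, t) * Qr (N + 1) t (sn (sn i y1) y))
        = dress u (fun γ δ => ∑ t, Umono N u (γ, o) (δ, t) * Qr N t (sn i y1)) x y α β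
          + (-1) ^ N * (if y1 = true ∧ y = true then
              dress u (fun γ δ => Umono N u (γ, o) (δ, i)) x false α β else 0) := by
      have hc : (fun γ δ => ∑ t, Umono N u (γ, o) (δ, t) * Qr N t (sn i y1))
          = (fun γ δ => ∑ t, Qr N t (sn i y1) * Umono N u (γ, o) (δ, t)) := by
        funext γ δ
        exact Finset.sum_congr rfl fun t _ => mul_comm _ _
      rw [hc, sum_conf, dress_sum u (fun t => Qr N t (sn i y1)) (fun t γ δ => Umono N u (γ, o) (δ, t))]
      simp only [Qr_succ, Umono_sn N, mul_add, Finset.sum_add_distrib, Fintype.sum_bool]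
      cases y <;> cases y1 <;> simp [mul_comm]
    have e3 : dress u (fun γ δ => ∑ s, Qr N o s * Umono (N + 1) u (γ, s) (δ, sn i y1)) x y α β
       = dF u ^ 2 * dress u (fun γ δ => ∑ t, Umono N u (γ, o) (δ, t) * Qr N t (sn i y1)) x y α β
         + (-1) ^ (N + 1) * dress u (Xc u (fun γ δ => Umono N u (γ, o) (δ, i)) y1) x y α β := by
      have : (fun γ δ => ∑ s, Qr N o s * Umono (N + 1) u (γ, s) (δ, sn i y1))
        = fun γ δ => dF u ^ 2 * (∑ t, Umono N u (γ, o) (δ, t) * Qr N t (sn i y1))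
          + (-1) ^ (N + 1) * Xc u (fun γ δ => Umono N u (γ, o) (δ, i)) y1 γ δ := by
        funext γ δ
        rw [← ih γ δ o i y1]; ring
      rw [this]
      simp only [dress, Fintype.sum_bool]
      ring
    rw [e1, e2, e3]
    have hl := local_id u (fun γ δ => Umono N u (γ, o) (δ, i)) x y1 y α β
    have : (fun γ δ => Umono (N + 1) u (γ, sn o x) (δ, sn i y1))
      = dress u (fun γ δ => Umono N u (γ, o) (δ, i)) x y1 := by
      funext γ δ; exact Umono_sn _ _ _ _ _ _ _ _
    rw [this]
    linear_combination (-(-1) ^ N) * hl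
/-- Theorem 1, 𝒟-relation: for every `N = n+2 ≥ 2` and every `u ∈ ℂ`,
`Q^(N) ∘ 𝒟^(N)(u) - d(u)² 𝒟^(N-1)(u) ∘ Q^(N) = (-1)^N b(u) c(u) (E⁺ ⊗ ℬ^(N-1)(u))`
(`Qop n = Q^(n+2)`). -/
theorem QD_commutation (n : ℕ) (u : ℂ) :
    Qop n * Dop (n + 2) u - dF u ^ 2 • (Dop (n + 1) u * Qop n)
      = ((-1 : ℂ) ^ (n + 2) * (bF u * cF u)) • Etens n true (Bop (n + 1) u) := by
  ext o i
  obtain ⟨i, y, rfl⟩ := sn_surj i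
  have h := main_rel (n + 1) u false false o i y
  simp only [Matrix.sub_apply, Matrix.smul_apply, Matrix.mul_apply, Qop_eq, Dop, Bop, Etens,
    Matrix.of_apply, smul_eq_mul, sn_last, sn_castSucc, cF]
  rw [h]
  cases y <;> simp [Xc]
  ring
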